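/- arXiv:1402.1891 — 2 statements merged into one kernel-verified Lean document; each statement's English description precedes it below -/
import Mathlib

section
/- Let H be a Hopf algebra with invertible antipode, A a right H-comodule algebra, and f: H → A a total integral which is an algebra map (with convolution inverse f^{-1} = f∘S). Then A, equipped with its original right H-coaction and the right H-action a·h = f^{-1}(h(1)) a f(h(2)), is a right-right Yetter–Drinfeld module over H. -/
open TensorProduct LinearMap

noncomputable section

variable {k H A M : Type*} [Field k] [Ring H] [HopfAlgebra k H]
  [Ring A] [Algebra k A] [AddCommGroup M] [Module k M]

local notation "Δ" => (Coalgebra.comul (R := k) (A := H))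
local notation "εH" => (Coalgebra.counit (R := k) (A := H))
local notation "𝒮" => (HopfAlgebra.antipode (R := k) (A := H))
local notation "mulH" => (LinearMap.mul' k H)
local notation "mulA" => (LinearMap.mul' k A)

/-- Right-hand side of the right-right (anti) Yetter-Drinfeld compatibility:
`m ⊗ h ↦ act (m₍₀₎ ⊗ h⑵) ⊗ s h⑴ * m₍₁₎ * h⑶`, where the comultiplication of `H` is `Dh`,
its multiplication is `mH` and `s` plays the role of the (inverse of the) antipode. -/
def ydRhs (mH : H ⊗[k] H →ₗ[k] H) (Dh : H →ₗ[k] H ⊗[k] H) (s : H →ₗ[k] H)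
    (act : M ⊗[k] H →ₗ[k] M) (ρM : M →ₗ[k] M ⊗[k] H) : M ⊗[k] H →ₗ[k] M ⊗[k] H :=
  lTensor M (mH ∘ₗ TensorProduct.map s mH) ∘ₗ
  (TensorProduct.assoc k M H (H ⊗[k] H)).toLinearMap ∘ₗ
  rTensor (H ⊗[k] H) (rTensor H act ∘ₗ (TensorProduct.assoc k M H H).symm.toLinearMap ∘ₗ
      lTensor M (TensorProduct.comm k H H).toLinearMap) ∘ₗ
  (tensorTensorTensorComm k M H (H ⊗[k] H) H).toLinearMap ∘ₗ
  TensorProduct.map ρM (rTensor H Dh ∘ₗ Dh)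

/-- Right-hand side of the left-right anti-Yetter-Drinfeld compatibility:
`h ⊗ m ↦ act (h⑵ ⊗ m₍₀₎) ⊗ h⑶ * m₍₁₎ * s h⑴`. -/
def aydLRRhs (mH : H ⊗[k] H →ₗ[k] H) (Dh : H →ₗ[k] H ⊗[k] H) (s : H →ₗ[k] H)
    (act : H ⊗[k] M →ₗ[k] M) (ρM : M →ₗ[k] M ⊗[k] H) : H ⊗[k] M →ₗ[k] M ⊗[k] H :=
  TensorProduct.map act
      (mH ∘ₗ lTensor H mH ∘ₗ lTensor H (lTensor H s) ∘ₗ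
        lTensor H (TensorProduct.comm k H H).toLinearMap ∘ₗ
        (TensorProduct.assoc k H H H).toLinearMap) ∘ₗ
  (tensorTensorTensorComm k H (H ⊗[k] H) M H).toLinearMap ∘ₗ
  TensorProduct.map
    ((TensorProduct.assoc k H H H).toLinearMap ∘ₗ
      (TensorProduct.comm k H (H ⊗[k] H)).toLinearMap ∘ₗ lTensor H Dh ∘ₗ Dh) ρM

/-- Right-hand side of the right-left anti-Yetter-Drinfeld compatibility:
`m ⊗ h ↦ s h⑶ * m₍₋₁₎ * h⑴ ⊗ act (m₍₀₎ ⊗ h⑵)`. -/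
def aydRLRhs (mH : H ⊗[k] H →ₗ[k] H) (Dh : H →ₗ[k] H ⊗[k] H) (s : H →ₗ[k] H)
    (act : M ⊗[k] H →ₗ[k] M) (lρ : M →ₗ[k] H ⊗[k] M) : M ⊗[k] H →ₗ[k] H ⊗[k] M :=
  rTensor M (mH ∘ₗ (TensorProduct.comm k H H).toLinearMap ∘ₗ lTensor H s) ∘ₗ
  (TensorProduct.assoc k H H M).symm.toLinearMap ∘ₗ
  lTensor H (TensorProduct.comm k M H).toLinearMap ∘ₗ
  TensorProduct.map mH (rTensor H act ∘ₗ (TensorProduct.assoc k M H H).symm.toLinearMap) ∘ₗ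
  (tensorTensorTensorComm k H M H (H ⊗[k] H)).toLinearMap ∘ₗ
  TensorProduct.map lρ (lTensor H Dh ∘ₗ Dh)

/-- `sandwich p q (a ⊗ (x ⊗ y)) = p x * a * q y`. -/
def sandwich (p q : H →ₗ[k] A) : A ⊗[k] (H ⊗[k] H) →ₗ[k] A :=
  mulA ∘ₗ TensorProduct.map (mulA ∘ₗ TensorProduct.map p LinearMap.id) q ∘ₗ
    rTensor H (TensorProduct.comm k A H).toLinearMap ∘ₗ
    (TensorProduct.assoc k A H H).symm.toLinearMap

/-- The right `H`-action `a · h = g h⑴ * a * f h⑵` attached to a total integral `f` with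
convolution inverse `g`. -/
def intAct (Dh : H →ₗ[k] H ⊗[k] H) (f g : H →ₗ[k] A) : A ⊗[k] H →ₗ[k] A :=
  sandwich g f ∘ₗ lTensor A Dh

/-- The left `H`-action `h · a = f h⑵ * a * g h⑴`. -/
def intActL (Dh : H →ₗ[k] H ⊗[k] H) (f g : H →ₗ[k] A) : H ⊗[k] A →ₗ[k] A :=
  sandwich f g ∘ₗ lTensor A ((TensorProduct.comm k H H).toLinearMap ∘ₗ Dh) ∘ₗ
    (TensorProduct.comm k H A).toLinearMap

/-- The set of coinvariants `B = {a | ρ a = a ⊗ 1}`. -/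
def coinv (ρA : A →ₗ[k] A ⊗[k] H) : Set A := {a : A | ρA a = a ⊗ₜ[k] (1 : H)}

/-- The canonical Galois map `A ⊗ A → A ⊗ H`, `a ⊗ a' ↦ a * a'₍₀₎ ⊗ a'₍₁₎`. -/
def canMap (ρA : A →ₗ[k] A ⊗[k] H) : A ⊗[k] A →ₗ[k] A ⊗[k] H :=
  rTensor H mulA ∘ₗ (TensorProduct.assoc k A A H).symm.toLinearMap ∘ₗ lTensor A ρA

/-- The kernel of `A ⊗ A → A ⊗_B A`: the span of the elements `(a*b) ⊗ a' - a ⊗ (b*a')`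
with `b` a coinvariant; so `A ⊗_B A = (A ⊗ A) ⧸ galRel ρA`. -/
def galRel (ρA : A →ₗ[k] A ⊗[k] H) : Submodule k (A ⊗[k] A) :=
  Submodule.span k {x : A ⊗[k] A |
    ∃ a a' b : A, b ∈ coinv ρA ∧ x = (a * b) ⊗ₜ[k] a' - a ⊗ₜ[k] (b * a')}

/-- The span of the commutators `[A, B]`, `B` the coinvariants; `A_B = A ⧸ commSub ρA`. -/
def commSub (ρA : A →ₗ[k] A ⊗[k] H) : Submodule k A :=
  Submodule.span k {x : A | ∃ a b : A, b ∈ coinv ρA ∧ x = a * b - b * a}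

/-- `δ(h⑴) • s h⑵`, the twisted antipode. -/
def twistS (δl : H →ₗ[k] k) (s : H →ₗ[k] H) (Dh : H →ₗ[k] H ⊗[k] H) : H →ₗ[k] H :=
  (TensorProduct.lid k H).toLinearMap ∘ₗ TensorProduct.map δl s ∘ₗ Dh

/-!
In the convolution algebra `Hom(H, A)` an algebra map `f` is a unit with inverse `f ∘ S`, and the
action is conjugation: `a · h = (f⁻¹ * a * f) h`, with `a` regarded as the map `h ↦ ε(h) a`.
Colinearity of `f` says that `ρ ∘ f = u * v` in `Hom(H, A ⊗ H)`, where `u h = f h ⊗ 1` and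
`v h = 1 ⊗ h`. As `ρ` is multiplicative, `ρ (a · h) = (v⁻¹ * u⁻¹ * ρ a * u * v) h`. The elements
`1 ⊗ c` commute with the values of `u`, so conjugating `ρ a` by `u` only acts on its first leg, and
conjugating by `v` produces the factors `S h⑴` and `h⑶` of the Yetter-Drinfeld condition.
-/

open WithConv Coalgebra
open Algebra.TensorProduct (includeLeft includeRight)

section Convolution

variable {R C L B D : Type*} [CommSemiring R] [Semiring B] [Algebra R B] [Semiring D] [Algebra R D]

section Coalgebra

variable [AddCommMonoid C] [Module R C] [Coalgebra R C]

variable (R C) in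
/-- The constant maps `x ↦ ε(x) b`, embedding an algebra `B` into the convolution algebra of
linear maps from a coalgebra `C` to `B`. -/
def convConst : B →ₐ[R] WithConv (C →ₗ[R] B) where
  toFun b := toConv (toSpanSingleton R B b ∘ₗ counit)
  map_one' := by ext x; simp [Algebra.algebraMap_eq_smul_one]
  map_mul' b c := by
    ext x
    simp [← map_comp_rTensor]
  map_zero' := by ext x; simp
  map_add' b c := by ext x; simp
  commutes' r := by ext x; simp [Algebra.algebraMap_eq_smul_one, smul_comm r]

lemma convConst_mul_apply (b : B) (q : WithConv (C →ₗ[R] B)) (x : C) :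
    (convConst R C b * q) x = b * q x := by
  simp [convConst, ← map_comp_rTensor]

lemma mul_convConst_apply (p : WithConv (C →ₗ[R] B)) (b : B) (x : C) :
    (p * convConst R C b) x = p x * b := by
  simp [convConst, ← map_comp_lTensor]

lemma commute_convConst {b : B} {q : WithConv (C →ₗ[R] B)} (h : ∀ x, Commute b (q x)) :
    Commute (convConst R C b) q := by
  ext x
  rw [convConst_mul_apply, mul_convConst_apply, (h x).eq]

lemma toConv_map_comp_comul (p : C →ₗ[R] B) (q : C →ₗ[R] D) :
    toConv (TensorProduct.map p q ∘ₗ comul) =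
      toConv ((includeLeft : B →ₐ[R] B ⊗[R] D).toLinearMap ∘ₗ p) *
        toConv ((includeRight : D →ₐ[R] B ⊗[R] D).toLinearMap ∘ₗ q) := by
  ext x
  simp only [(ℛ R x).convMul_apply]
  simp [← (ℛ R x).eq]

end Coalgebra

variable [Semiring L] [HopfAlgebra R L]

/-- An algebra map `φ` from a Hopf algebra, as a unit of the convolution algebra; its inverse is
`φ ∘ S`. -/
def convUnit (φ : L →ₐ[R] B) : (WithConv (L →ₗ[R] B))ˣ where
  val := toConv φ.toLinearMap
  inv := toConv (φ.toLinearMap ∘ₗ HopfAlgebra.antipode R)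
  val_inv := by
    ext x
    rw [(ℛ R x).convMul_apply]
    simp [← map_mul, ← map_sum, HopfAlgebra.sum_mul_antipode_eq_algebraMap_counit]
  inv_val := by
    ext x
    rw [(ℛ R x).convMul_apply]
    simp [← map_mul, ← map_sum, HopfAlgebra.sum_antipode_mul_eq_algebraMap_counit]

lemma convUnit_map_comp_comulAlgHom (φ : L →ₐ[R] B) (ψ : L →ₐ[R] D) :
    convUnit ((Algebra.TensorProduct.map φ ψ).comp (Bialgebra.comulAlgHom R L)) =
      convUnit ((includeLeft : B →ₐ[R] B ⊗[R] D).comp φ) *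
        convUnit ((includeRight : D →ₐ[R] B ⊗[R] D).comp ψ) :=
  Units.ext (toConv_map_comp_comul φ.toLinearMap ψ.toLinearMap)

end Convolution

section AdjointAction

lemma sandwich_tmul (p q : H →ₗ[k] A) (a : A) (x y : H) :
    sandwich p q (a ⊗ₜ[k] (x ⊗ₜ[k] y)) = p x * a * q y := by
  simp [sandwich]

lemma sandwich_tmul_mul {p q : H →ₗ[k] A} (hp : ∀ x y, p (x * y) = p y * p x)
    (hq : ∀ x y, q (x * y) = q x * q y) (a : A) (s t : H ⊗[k] H) :
    sandwich p q (a ⊗ₜ[k] (s * t)) = sandwich p q (sandwich p q (a ⊗ₜ[k] s) ⊗ₜ[k] t) := by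
  induction s with
  | zero => simp
  | add s₁ s₂ h₁ h₂ => simp only [add_mul, tmul_add, add_tmul, map_add, h₁, h₂]
  | tmul x y =>
    induction t with
    | zero => simp
    | add t₁ t₂ h₁ h₂ => simp only [mul_add, tmul_add, map_add, h₁, h₂]
    | tmul z w =>
      simp only [Algebra.TensorProduct.tmul_mul_tmul, sandwich_tmul, hp, hq, mul_assoc]

lemma intAct_comp_lTensor_mul {f g : H →ₗ[k] A} (hg : ∀ x y, g (x * y) = g y * g x)
    (hf : ∀ x y, f (x * y) = f x * f y) :
    intAct Δ f g ∘ₗ lTensor A mulH =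
      intAct Δ f g ∘ₗ rTensor H (intAct Δ f g) ∘ₗ
        (TensorProduct.assoc k A H H).symm.toLinearMap := by
  ext a x y
  simpa [intAct] using sandwich_tmul_mul hg hf a (Δ x) (Δ y)

lemma intAct_tmul_one {f g : H →ₗ[k] A} (hf : f 1 = 1) (hg : g 1 = 1) (a : A) :
    intAct Δ f g (a ⊗ₜ[k] (1 : H)) = a := by
  simp [intAct, Algebra.TensorProduct.one_def, sandwich_tmul, hf, hg]

lemma intAct_tmul (f g : H →ₗ[k] A) (a : A) {h : H} {ι : Type*} (𝓡 : Repr k h ι) :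
    intAct Δ f g (a ⊗ₜ[k] h) = ∑ i ∈ 𝓡.index, g (𝓡.left i) * a * f (𝓡.right i) := by
  simp [intAct, ← 𝓡.eq, tmul_sum, sandwich_tmul]

/-- The right adjoint action `a · h = f (S h⑴) * a * f h⑵` of `H` on `A` along an algebra map
`f : H → A`. -/
abbrev adAct (f : H →ₐ[k] A) : A ⊗[k] H →ₗ[k] A :=
  intAct Δ f.toLinearMap (f.toLinearMap ∘ₗ 𝒮)

lemma map_adAct_tmul {B : Type*} [Semiring B] [Algebra k B] {φ : A →ₗ[k] B}
    (hφ : ∀ x y, φ (x * y) = φ x * φ y) {f : H →ₐ[k] A} {g : H →ₐ[k] B}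
    (hg : φ ∘ₗ f.toLinearMap = g.toLinearMap) (a : A) (h : H) :
    φ (adAct f (a ⊗ₜ[k] h)) =
      ((convUnit g)⁻¹.val * convConst k H (φ a) * (convUnit g).val) h := by
  have hg_apply (x : H) : φ (f x) = g x := LinearMap.congr_fun hg x
  rw [(ℛ k h).convMul_apply, intAct_tmul _ _ a (ℛ k h), map_sum]
  refine Finset.sum_congr rfl fun i _ => ?_
  rw [mul_convConst_apply, hφ, hφ]
  simp [convUnit, hg_apply]

end AdjointAction

section YetterDrinfeld

local notation "ιA" => (includeLeft (R := k) (S := k) (A := A) (B := H))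
local notation "ιH" => (includeRight (R := k) (A := A) (B := H))

lemma ydRhs_tmul {I : Type*} (s : H →ₗ[k] H) (act : A ⊗[k] H →ₗ[k] A) {ρ : A →ₗ[k] A ⊗[k] H}
    {a : A} {t : Finset I} {b : I → A} {c : I → H} (ha : ρ a = ∑ i ∈ t, b i ⊗ₜ[k] c i) (h : H) :
    ydRhs mulH Δ s act ρ (a ⊗ₜ[k] h) =
      ∑ i ∈ t, (toConv ((ιH).toLinearMap ∘ₗ s) *
        (toConv ((ιA).toLinearMap ∘ₗ act ∘ₗ TensorProduct.mk k A H (b i)) *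
          convConst k H (1 ⊗ₜ[k] c i)) *
        toConv (ιH).toLinearMap : WithConv (H →ₗ[k] A ⊗[k] H)) h := by
  simp only [ydRhs, LinearMap.comp_apply, TensorProduct.map_tmul, ha, sum_tmul, map_sum]
  refine Finset.sum_congr rfl fun i _ => ?_
  rw [← mul_assoc, (ℛ k h).convMul_apply]
  simp only [← (ℛ k h).eq, mul_convConst_apply, map_sum, tmul_sum, rTensor_tmul]
  refine Finset.sum_congr rfl fun j _ => ?_
  rw [(ℛ k ((ℛ k h).left j)).convMul_apply, ← (ℛ k ((ℛ k h).left j)).eq]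
  simp [tmul_sum, sum_tmul, Finset.sum_mul, mul_assoc]

lemma convUnit_conj_convConst_tmul (f : H →ₐ[k] A) (b : A) (c : H) :
    (convUnit ((ιA).comp f))⁻¹.val * convConst k H (b ⊗ₜ[k] c) * (convUnit ((ιA).comp f)).val =
      toConv ((ιA).toLinearMap ∘ₗ adAct f ∘ₗ TensorProduct.mk k A H b) *
        convConst k H (1 ⊗ₜ[k] c) := by
  set u := convUnit ((ιA).comp f) with hu
  have hbc : convConst k H (b ⊗ₜ[k] c) =
      convConst k H (b ⊗ₜ[k] (1 : H)) * convConst k H ((1 : A) ⊗ₜ[k] c) := by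
    rw [← map_mul, Algebra.TensorProduct.tmul_mul_tmul, mul_one, one_mul]
  have hcu : Commute (convConst k H ((1 : A) ⊗ₜ[k] c)) u.val :=
    commute_convConst fun x => by simp [hu, convUnit, commute_iff_eq]
  have hb : toConv ((ιA).toLinearMap ∘ₗ adAct f ∘ₗ TensorProduct.mk k A H b) =
      u⁻¹.val * convConst k H (b ⊗ₜ[k] (1 : H)) * u.val := by
    ext h
    exact map_adAct_tmul (φ := (ιA).toLinearMap) (map_mul ιA) rfl b h
  calc u⁻¹.val * convConst k H (b ⊗ₜ[k] c) * u.val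
      = u⁻¹.val * convConst k H (b ⊗ₜ[k] (1 : H)) *
          (convConst k H ((1 : A) ⊗ₜ[k] c) * u.val) := by simp only [hbc, mul_assoc]
    _ = u⁻¹.val * convConst k H (b ⊗ₜ[k] (1 : H)) * u.val *
          convConst k H ((1 : A) ⊗ₜ[k] c) := by rw [hcu.eq, mul_assoc _ u.val]
    _ = _ := by rw [hb]

lemma comp_adAct_eq_ydRhs {ρ : A →ₗ[k] A ⊗[k] H} (hρ : ∀ x y, ρ (x * y) = ρ x * ρ y)
    {f : H →ₐ[k] A} (hf : ρ ∘ₗ f.toLinearMap = rTensor H f.toLinearMap ∘ₗ Δ) :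
    ρ ∘ₗ adAct f = ydRhs mulH Δ 𝒮 (adAct f) ρ := by
  ext a h
  obtain ⟨t, ht⟩ := exists_finset (ρ a)
  let u := convUnit ((ιA).comp f)
  let v := convUnit ιH
  have huv :
      convUnit ((Algebra.TensorProduct.map f (.id k H)).comp (Bialgebra.comulAlgHom k H)) = u * v :=
    convUnit_map_comp_comulAlgHom f (.id k H)
  calc ρ (adAct f (a ⊗ₜ[k] h))
      = ((u * v)⁻¹.val * convConst k H (ρ a) * (u * v).val) h := by
        rw [← huv]; exact map_adAct_tmul hρ hf a h
    _ = ∑ i ∈ t, (v⁻¹.val * (u⁻¹.val * convConst k H (i.1 ⊗ₜ[k] i.2) * u.val) * v.val) h := by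
        simp only [ht, map_sum, mul_inv_rev, Units.val_mul, Finset.mul_sum, Finset.sum_mul,
          mul_assoc, ofConv_sum, LinearMap.sum_apply]
    _ = ∑ i ∈ t, (v⁻¹.val *
          (toConv ((ιA).toLinearMap ∘ₗ adAct f ∘ₗ TensorProduct.mk k A H i.1) *
            convConst k H (1 ⊗ₜ[k] i.2)) * v.val : WithConv (H →ₗ[k] A ⊗[k] H)) h := by
        simp only [u, convUnit_conj_convConst_tmul]
    _ = ydRhs mulH Δ 𝒮 (adAct f) ρ (a ⊗ₜ[k] h) := (ydRhs_tmul 𝒮 (adAct f) ht h).symm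

end YetterDrinfeld

theorem total_integral_algebra_map_gives_YD_general {ρ : A →ₗ[k] A ⊗[k] H}
    (hρ_mul : ∀ x y : A, ρ (x * y) = ρ x * ρ y) {f : H →ₐ[k] A}
    (hf_comod : ρ ∘ₗ f.toLinearMap = rTensor H f.toLinearMap ∘ₗ Δ) :
    (adAct f ∘ₗ lTensor A mulH =
      adAct f ∘ₗ rTensor H (adAct f) ∘ₗ (TensorProduct.assoc k A H H).symm.toLinearMap) ∧
    (∀ x : A, adAct f (x ⊗ₜ[k] (1 : H)) = x) ∧
    (ρ ∘ₗ adAct f = ydRhs mulH Δ 𝒮 (adAct f) ρ) := by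
  have hfS_mul (x y : H) : f (𝒮 (x * y)) = f (𝒮 y) * f (𝒮 x) := by
    rw [HopfAlgebra.antipode_mul_antidistrib, map_mul]
  have hfS_one : f (𝒮 1) = 1 := by rw [HopfAlgebra.antipode_one, map_one]
  exact ⟨intAct_comp_lTensor_mul hfS_mul (map_mul f), intAct_tmul_one (map_one f) hfS_one,
    comp_adAct_eq_ydRhs hρ_mul hf_comod⟩

/-- For a total integral `f : H → A` which is an algebra map, `A` with its
original coaction and the action `a · h = f⁻¹ h⑴ * a * f h⑵` is a right-right Yetter-Drinfeld
module over `H`. -/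
theorem total_integral_algebra_map_gives_YD
    (Sinv : H →ₗ[k] H) (hS₁ : Sinv ∘ₗ 𝒮 = LinearMap.id) (hS₂ : 𝒮 ∘ₗ Sinv = LinearMap.id)
    (ρA : A →ₗ[k] A ⊗[k] H)
    (hρ_coassoc : (TensorProduct.assoc k A H H).toLinearMap ∘ₗ rTensor H ρA ∘ₗ ρA =
      lTensor A Δ ∘ₗ ρA)
    (hρ_counit : (TensorProduct.rid k A).toLinearMap ∘ₗ lTensor A εH ∘ₗ ρA = LinearMap.id)
    (hρ_one : ρA 1 = (1 : A) ⊗ₜ[k] (1 : H))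
    (hρ_mul : ∀ x y : A, ρA (x * y) = ρA x * ρA y)
    (f : H →ₗ[k] A) (hf_one : f 1 = 1)
    (hf_comod : ρA ∘ₗ f = rTensor H f ∘ₗ Δ)
    (hf_mul : ∀ x y : H, f (x * y) = f x * f y)
 :
    (intAct Δ f (f ∘ₗ 𝒮) ∘ₗ lTensor A mulH =
      intAct Δ f (f ∘ₗ 𝒮) ∘ₗ rTensor H (intAct Δ f (f ∘ₗ 𝒮)) ∘ₗ (TensorProduct.assoc k A H H).symm.toLinearMap) ∧
    (∀ x : A, (intAct Δ f (f ∘ₗ 𝒮)) (x ⊗ₜ[k] (1 : H)) = x) ∧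
    (ρA ∘ₗ intAct Δ f (f ∘ₗ 𝒮) = ydRhs mulH Δ 𝒮 (intAct Δ f (f ∘ₗ 𝒮)) ρA) :=
  total_integral_algebra_map_gives_YD_general (f := .ofLinearMap f hf_one hf_mul) hρ_mul hf_comod
end
end

section
/- Let H be a Hopf algebra with invertible antipode, C a right H-module coalgebra, and f: C → H a total cointegral which is a coalgebra map (with convolution inverse f^{-1} = S∘f). Then C^D, with its original right H-action and the left H-coaction c ↦ f^{-1}(c(3)) f(c(1)) ⊗ c(2), is a right-left anti Yetter–Drinfeld module over H. Moreover, if c(2)·(f^{-1}(c(3)) f(c(1))) = c for all c ∈ C^D, then this module is stable. -/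
open TensorProduct LinearMap

noncomputable section

variable {k H C M : Type*} [Field k] [Ring H] [HopfAlgebra k H]
  [AddCommGroup C] [Module k C] [Coalgebra k C] [AddCommGroup M] [Module k M]

local notation "Δ" => (Coalgebra.comul (R := k) (A := H))
local notation "εH" => (Coalgebra.counit (R := k) (A := H))
local notation "𝒮" => (HopfAlgebra.antipode (R := k) (A := H))
local notation "mulH" => (LinearMap.mul' k H)
local notation "ΔC" => (Coalgebra.comul (R := k) (A := C))
local notation "εC" => (Coalgebra.counit (R := k) (A := C))

/-- The right `H`-coaction `c ↦ c⑵ ⊗ g c⑴ * f c⑶` attached to a total cointegral `f` with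
convolution inverse `g`. -/
def coactInt (f g : C →ₗ[k] H) : C →ₗ[k] C ⊗[k] H :=
  lTensor C (mulH ∘ₗ TensorProduct.map g f) ∘ₗ
    lTensor C (TensorProduct.comm k C C).toLinearMap ∘ₗ
    (TensorProduct.assoc k C C C).toLinearMap ∘ₗ
    (TensorProduct.comm k C (C ⊗[k] C)).toLinearMap ∘ₗ lTensor C ΔC ∘ₗ ΔC

/-- The left `H`-coaction `c ↦ g c⑶ * f c⑴ ⊗ c⑵`. -/
def lcoactA (f g : C →ₗ[k] H) : C →ₗ[k] H ⊗[k] C :=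
  rTensor C (mulH ∘ₗ TensorProduct.map g f) ∘ₗ
    rTensor C (TensorProduct.comm k C C).toLinearMap ∘ₗ
    (TensorProduct.assoc k C C C).symm.toLinearMap ∘ₗ
    lTensor C (TensorProduct.comm k C C).toLinearMap ∘ₗ lTensor C ΔC ∘ₗ ΔC

/-- The left `H`-coaction `c ↦ g c⑴ * f c⑶ ⊗ c⑵`. -/
def lcoactB (f g : C →ₗ[k] H) : C →ₗ[k] H ⊗[k] C :=
  rTensor C (mulH ∘ₗ TensorProduct.map g f) ∘ₗ
    (TensorProduct.assoc k C C C).symm.toLinearMap ∘ₗ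
    lTensor C (TensorProduct.comm k C C).toLinearMap ∘ₗ lTensor C ΔC ∘ₗ ΔC

/-- The coideal `I = span {c·h - ε(h) c}`, so that `D = C ⧸ modIdeal γ`. -/
def modIdeal (γ : C ⊗[k] H →ₗ[k] C) : Submodule k C :=
  Submodule.span k {x : C | ∃ c h, x = γ (c ⊗ₜ[k] h) - εH h • c}

/-- The subspace `C^D = {c | c⑴ φ(π c⑵) = c⑵ φ(π c⑴) for all φ ∈ D*}`. -/
def cdSub (γ : C ⊗[k] H →ₗ[k] C) : Submodule k C :=
  ⨅ φ : (C ⧸ modIdeal γ) →ₗ[k] k,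
    LinearMap.ker
      ((TensorProduct.rid k C).toLinearMap ∘ₗ lTensor C (φ ∘ₗ (modIdeal γ).mkQ) ∘ₗ ΔC -
        (TensorProduct.lid k C).toLinearMap ∘ₗ rTensor C (φ ∘ₗ (modIdeal γ).mkQ) ∘ₗ ΔC)

/-- The canonical map `C ⊗ H → C ⊗ C`, `c ⊗ h ↦ c⑴ ⊗ c⑵ · h`, of a Hopf Galois coextension. -/
def canMapC (γ : C ⊗[k] H →ₗ[k] C) : C ⊗[k] H →ₗ[k] C ⊗[k] C :=
  lTensor C γ ∘ₗ (TensorProduct.assoc k C C H).toLinearMap ∘ₗ rTensor H ΔC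

/-- The cotensor product `C □_D C` as a subspace of `C ⊗ C`. -/
def cotensorC (γ : C ⊗[k] H →ₗ[k] C) : Submodule k (C ⊗[k] C) :=
  LinearMap.ker
    ((TensorProduct.assoc k C (C ⧸ modIdeal γ) C).toLinearMap ∘ₗ
        rTensor C (lTensor C (modIdeal γ).mkQ ∘ₗ ΔC) -
      lTensor C (rTensor C (modIdeal γ).mkQ ∘ₗ ΔC))

/-- `c ⊗ c' ↦ c⑴ ⊗ fInv c⑵ * f c'`, the candidate for `can⁻¹`. -/
def psiMap (f fInv : C →ₗ[k] H) : C ⊗[k] C →ₗ[k] C ⊗[k] H :=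
  lTensor C (mulH ∘ₗ TensorProduct.map fInv f) ∘ₗ
    (TensorProduct.assoc k C C C).toLinearMap ∘ₗ rTensor C ΔC

/-- `κ = (ε ⊗ id) ∘ can⁻¹`, built from a chosen section `inv` of the canonical map. -/
def kappaOf (inv : C ⊗[k] C →ₗ[k] C ⊗[k] H) : C ⊗[k] C →ₗ[k] H :=
  (TensorProduct.lid k H).toLinearMap ∘ₗ rTensor H εC ∘ₗ inv

/-- The coaction `c ↦ c⑵ ⊗ κ (c⑴ ⊗ c⑶)`. -/
def coactKappa (inv : C ⊗[k] C →ₗ[k] C ⊗[k] H) : C →ₗ[k] C ⊗[k] H :=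
  lTensor C (kappaOf inv) ∘ₗ (TensorProduct.assoc k C C C).toLinearMap ∘ₗ
    rTensor C (TensorProduct.comm k C C).toLinearMap ∘ₗ
    (TensorProduct.assoc k C C C).symm.toLinearMap ∘ₗ lTensor C ΔC ∘ₗ ΔC

/-!
Write `S` for the antipode and `π : C → D` for the projection. Since `f` is a coalgebra map, the
coaction `c ↦ S (f c⑶) * f c⑴ ⊗ c⑵` is the coadjoint coaction of `C` corestricted along `f`, and it
is an anti-Yetter-Drinfeld coaction on all of `C`; the real issue is that `C^D` is a subcomodule.
Since `H ⊗ -` is exact and `C^D` is the equalizer of `c ↦ c⑴ ⊗ π c⑵` and `c ↦ c⑵ ⊗ π c⑴`, it is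
enough that a single linear map `L` carries both `c⑴ ⊗ π c⑵` to `S (f c⑷) * f c⑴ ⊗ c⑵ ⊗ π c⑶` and
`c⑵ ⊗ π c⑴` to `S (f c⑷) * f c⑴ ⊗ c⑶ ⊗ π c⑵`. By the `H`-linearity of `f`, the map
`c ↦ f c⑴ * S (f c⑶) ⊗ π c⑵` vanishes on every `c·h - ε(h) c`, so it descends to a map `κ` on `D`,
and `L` is `c ⊗ d ↦ S (f c⑶) * κ₁ d * f c⑴ ⊗ c⑵ ⊗ κ₂ d`, where `κ d = κ₁ d ⊗ κ₂ d`: if `d` comes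
from after `c⑶`, the factor `f` of `κ₁` cancels against `S (f c⑶)`; if it comes from before `c⑴`,
the factor `S ∘ f` of `κ₁` cancels against `f c⑴`.
-/

/-- The map `a ↦ P a⑴ ⊗ Q a⑵`, written `P ⋆ Q`: the convolution of `P` and `Q` before any
multiplication is applied. Iterated right-nested, it plays the role of Sweedler notation. -/
def convTensor {R A X Y : Type*} [CommSemiring R] [AddCommMonoid A] [Module R A] [Coalgebra R A]
    [AddCommMonoid X] [Module R X] [AddCommMonoid Y] [Module R Y]
    (P : A →ₗ[R] X) (Q : A →ₗ[R] Y) : A →ₗ[R] X ⊗[R] Y :=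
  TensorProduct.map P Q ∘ₗ Coalgebra.comul

local notation:90 P:91 "⋆" Q:90 => convTensor P Q

section ConvTensor

variable {R A A' X X' Y Y' Z Z' : Type*} [CommSemiring R]
  [AddCommMonoid A] [Module R A] [Coalgebra R A] [AddCommMonoid A'] [Module R A'] [Coalgebra R A']
  [AddCommMonoid X] [Module R X] [AddCommMonoid X'] [Module R X']
  [AddCommMonoid Y] [Module R Y] [AddCommMonoid Y'] [Module R Y']
  [AddCommMonoid Z] [Module R Z] [AddCommMonoid Z'] [Module R Z']

theorem id_convTensor_id : (id : A →ₗ[R] A) ⋆ (id : A →ₗ[R] A) = Coalgebra.comul := by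
  rw [convTensor, TensorProduct.map_id, id_comp]

theorem map_comp_convTensor (u : X →ₗ[R] X') (v : Y →ₗ[R] Y') (P : A →ₗ[R] X) (Q : A →ₗ[R] Y) :
    TensorProduct.map u v ∘ₗ P ⋆ Q = (u ∘ₗ P) ⋆ (v ∘ₗ Q) := by
  rw [convTensor, convTensor, TensorProduct.map_comp, comp_assoc]

theorem comp_convTensor (u : X →ₗ[R] X') (P : A →ₗ[R] X) (Q : A →ₗ[R] Y) :
    (u ∘ₗ P) ⋆ Q = rTensor Y u ∘ₗ P ⋆ Q := by
  rw [rTensor_def, map_comp_convTensor, id_comp]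

theorem convTensor_comp (v : Y →ₗ[R] Y') (P : A →ₗ[R] X) (Q : A →ₗ[R] Y) :
    P ⋆ (v ∘ₗ Q) = lTensor X v ∘ₗ P ⋆ Q := by
  rw [lTensor_def, map_comp_convTensor, id_comp]

theorem convTensor_assoc (P : A →ₗ[R] X) (Q : A →ₗ[R] Y) (T : A →ₗ[R] Z) :
    (P ⋆ Q) ⋆ T = (TensorProduct.assoc R X Y Z).symm.toLinearMap ∘ₗ P ⋆ Q ⋆ T := by
  rw [LinearEquiv.eq_toLinearMap_symm_comp]
  calc (TensorProduct.assoc R X Y Z).toLinearMap ∘ₗ (P ⋆ Q) ⋆ T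
      = ((TensorProduct.assoc R X Y Z).toLinearMap ∘ₗ
          TensorProduct.map (TensorProduct.map P Q) T) ∘ₗ
            rTensor A Coalgebra.comul ∘ₗ Coalgebra.comul := by
        rw [comp_assoc, ← comp_assoc _ (rTensor A _), map_comp_rTensor]; rfl
    _ = TensorProduct.map P (TensorProduct.map Q T) ∘ₗ
          lTensor A Coalgebra.comul ∘ₗ Coalgebra.comul := by
        rw [← TensorProduct.map_map_comp_assoc_eq, comp_assoc, Coalgebra.coassoc]
    _ = P ⋆ Q ⋆ T := by rw [← comp_assoc, map_comp_lTensor]; rfl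

theorem id_convTensor_id_convTensor_id :
    (id : A →ₗ[R] A) ⋆ (id : A →ₗ[R] A) ⋆ (id : A →ₗ[R] A) =
      lTensor A Coalgebra.comul ∘ₗ Coalgebra.comul := by
  rw [id_convTensor_id, ← comp_id Coalgebra.comul, convTensor_comp, id_convTensor_id, comp_id]

theorem counit_convTensor (Q : A →ₗ[R] Y) :
    Coalgebra.counit ⋆ Q = (TensorProduct.lid R Y).symm.toLinearMap ∘ₗ Q := by
  rw [convTensor, ← lTensor_comp_rTensor, comp_assoc, Coalgebra.rTensor_counit_comp_comul]
  ext; simp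

theorem convTensor_counit (P : A →ₗ[R] X) :
    P ⋆ Coalgebra.counit = (TensorProduct.rid R X).symm.toLinearMap ∘ₗ P := by
  rw [convTensor, ← rTensor_comp_lTensor, comp_assoc, Coalgebra.lTensor_counit_comp_comul]
  ext; simp

theorem comul_comp_coalgHom (g : A' →ₗc[R] A) :
    Coalgebra.comul ∘ₗ g.toLinearMap = g.toLinearMap ⋆ g.toLinearMap :=
  g.map_comp_comul.symm

theorem convTensor_comp_coalgHom (P : A →ₗ[R] X) (Q : A →ₗ[R] Y) (g : A' →ₗc[R] A) :
    P ⋆ Q ∘ₗ g.toLinearMap = (P ∘ₗ g.toLinearMap) ⋆ (Q ∘ₗ g.toLinearMap) := by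
  rw [convTensor, comp_assoc, comul_comp_coalgHom, map_comp_convTensor]

theorem map_convTensor_map (P : A →ₗ[R] X) (Q : A →ₗ[R] Y) (P' : A' →ₗ[R] X')
    (Q' : A' →ₗ[R] Y') :
    TensorProduct.map P P' ⋆ TensorProduct.map Q Q' =
      (tensorTensorTensorComm R X Y X' Y').toLinearMap ∘ₗ
        TensorProduct.map (P ⋆ Q) (P' ⋆ Q') := by
  rw [convTensor, TensorProduct.comul_def, TensorProduct.AlgebraTensorModule.map_eq,
    TensorProduct.AlgebraTensorModule.tensorTensorTensorComm_eq, ← comp_assoc,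
    ← TensorProduct.tensorTensorTensorComm_comp_map, comp_assoc, ← TensorProduct.map_comp]
  rfl

theorem map_convTensor_map_convTensor_map (P : A →ₗ[R] X) (Q : A →ₗ[R] Y) (T : A →ₗ[R] Z)
    (P' : A' →ₗ[R] X') (Q' : A' →ₗ[R] Y') (T' : A' →ₗ[R] Z') :
    TensorProduct.map P P' ⋆ TensorProduct.map Q Q' ⋆ TensorProduct.map T T' =
      (lTensor (X ⊗[R] X') (tensorTensorTensorComm R Y Z Y' Z').toLinearMap ∘ₗ
        (tensorTensorTensorComm R X (Y ⊗[R] Z) X' (Y' ⊗[R] Z')).toLinearMap) ∘ₗ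
          TensorProduct.map (P ⋆ Q ⋆ T) (P' ⋆ Q' ⋆ T') := by
  rw [map_convTensor_map Q T, convTensor_comp, map_convTensor_map, comp_assoc]

end ConvTensor

section Antipode

open WithConv (toConv)

variable {R A B : Type*} [CommSemiring R] [AddCommMonoid A] [Module R A] [Coalgebra R A]
  [Semiring B] [HopfAlgebra R B]

theorem mul_antipode_convTensor (f : A →ₗc[R] B) :
    mul' R B ∘ₗ (HopfAlgebra.antipode R ∘ₗ f.toLinearMap) ⋆ f.toLinearMap =
      Algebra.linearMap R B ∘ₗ Coalgebra.counit := by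
  rw [comp_convTensor, ← comul_comp_coalgHom, ← comp_assoc, ← comp_assoc, comp_assoc _ _ (mul' R B),
    HopfAlgebra.mul_antipode_rTensor_comul, comp_assoc, f.counit_comp]

theorem toConv_comp_antipode_mul {E : Type*} [Semiring E] [Algebra R E] (i : B →ₐ[R] E) :
    toConv (i.toLinearMap ∘ₗ HopfAlgebra.antipode R) * toConv i.toLinearMap = 1 := by
  have h := LinearMap.algHom_comp_convMul_distrib i
    (toConv (HopfAlgebra.antipode R)) (toConv (id : B →ₗ[R] B))
  rw [LinearMap.antipode_mul_id] at h
  ext b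
  simpa using (LinearMap.congr_fun h b).symm

-- In the convolution algebra `Hom(B, B ⊗ B)` the comultiplication is the product of the two
-- inclusions `b ↦ b ⊗ 1` and `b ↦ 1 ⊗ b`, so its inverse is the reversed product of their inverses.
theorem comul_comp_antipode :
    Coalgebra.comul ∘ₗ HopfAlgebra.antipode R =
      (TensorProduct.comm R B B).toLinearMap ∘ₗ
        (HopfAlgebra.antipode R : B →ₗ[R] B) ⋆ (HopfAlgebra.antipode R : B →ₗ[R] B) := by
  set S : B →ₗ[R] B := HopfAlgebra.antipode R
  let i₁ : B →ₐ[R] B ⊗[R] B := Algebra.TensorProduct.includeLeft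
  let i₂ : B →ₐ[R] B ⊗[R] B := Algebra.TensorProduct.includeRight
  have comul_eq : toConv (Coalgebra.comul (R := R) (A := B)) =
      toConv i₁.toLinearMap * toConv i₂.toLinearMap := by
    rw [LinearMap.convMul_def, ← comp_assoc]
    have : mul' R (B ⊗[R] B) ∘ₗ TensorProduct.map i₁.toLinearMap i₂.toLinearMap = LinearMap.id := by
      ext; simp [i₁, i₂]
    simp [this]
  have antipode_eq : toConv ((TensorProduct.comm R B B).toLinearMap ∘ₗ S ⋆ S) =
      toConv (i₂.toLinearMap ∘ₗ S) * toConv (i₁.toLinearMap ∘ₗ S) := by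
    rw [LinearMap.convMul_def, convTensor, ← comp_assoc, ← comp_assoc]
    congr 2
    ext; simp [i₁, i₂]
  have left_inv : toConv ((TensorProduct.comm R B B).toLinearMap ∘ₗ S ⋆ S) *
      toConv (Coalgebra.comul (R := R) (A := B)) = 1 := by
    rw [antipode_eq, comul_eq, mul_assoc, ← mul_assoc (toConv (i₁.toLinearMap ∘ₗ S)),
      toConv_comp_antipode_mul, one_mul, toConv_comp_antipode_mul]
  exact (WithConv.toConv_injective
    (left_inv_eq_right_inv left_inv LinearMap.comul_right_inv)).symm

end Antipode

section AdjointCoaction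

variable {R A B X X' Y Y' Z : Type*} [CommSemiring R] [AddCommMonoid A] [Module R A] [Coalgebra R A]
  [AddCommMonoid X] [Module R X] [AddCommMonoid X'] [Module R X']
  [AddCommMonoid Y] [Module R Y] [AddCommMonoid Y'] [Module R Y'] [AddCommMonoid Z] [Module R Z]

/-- The map `y ⊗ (x ⊗ y') ↦ m (y ⊗ y') ⊗ x`, which combines the outer tensor factors. -/
def outer (m : Y ⊗[R] Y' →ₗ[R] Z) : Y ⊗[R] (X ⊗[R] Y') →ₗ[R] Z ⊗[R] X :=
  rTensor X m ∘ₗ (TensorProduct.assoc R Y Y' X).symm.toLinearMap ∘ₗ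
    lTensor Y (TensorProduct.comm R X Y').toLinearMap

@[simp]
theorem outer_tmul (m : Y ⊗[R] Y' →ₗ[R] Z) (y : Y) (x : X) (y' : Y') :
    outer m (y ⊗ₜ[R] (x ⊗ₜ[R] y')) = m (y ⊗ₜ[R] y') ⊗ₜ[R] x := rfl

theorem lTensor_comp_outer (m : Y ⊗[R] Y' →ₗ[R] Z) (v : X →ₗ[R] X') :
    lTensor Z v ∘ₗ outer m = outer m ∘ₗ lTensor Y (rTensor Y' v) := by
  ext; simp

variable [Semiring B] [HopfAlgebra R B]

local notation "S" => (HopfAlgebra.antipode R (A := B))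

/-- The map `a ↦ S (f a⑶) * f a⑴ ⊗ u a⑵`. For `u = id` it is the left coaction of the theorem:
the right coadjoint coaction of `A`, corestricted along `f`. -/
def adCoaction (f : A →ₗc[R] B) (u : A →ₗ[R] X) : A →ₗ[R] B ⊗[R] X :=
  outer (mul' R B ∘ₗ rTensor B S ∘ₗ (TensorProduct.comm R B B).toLinearMap) ∘ₗ
    f.toLinearMap ⋆ u ⋆ f.toLinearMap

/-- The map `a ↦ f a⑴ * S (f a⑶) ⊗ u a⑵`. Unlike `adCoaction f u`, it passes to the quotient by
an action for which `f` is linear and `u` is invariant. -/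
def conjMap (f : A →ₗc[R] B) (u : A →ₗ[R] X) : A →ₗ[R] B ⊗[R] X :=
  outer (mul' R B ∘ₗ lTensor B S) ∘ₗ f.toLinearMap ⋆ u ⋆ f.toLinearMap

theorem lTensor_comp_adCoaction (f : A →ₗc[R] B) (v : X →ₗ[R] X') (u : A →ₗ[R] X) :
    lTensor B v ∘ₗ adCoaction f u = adCoaction f (v ∘ₗ u) := by
  rw [adCoaction, ← comp_assoc, lTensor_comp_outer, comp_assoc, adCoaction, comp_convTensor,
    convTensor_comp]

theorem counit_comp_adCoaction (f : A →ₗc[R] B) (u : A →ₗ[R] X) :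
    (TensorProduct.lid R X).toLinearMap ∘ₗ rTensor X Coalgebra.counit ∘ₗ adCoaction f u = u := by
  calc (TensorProduct.lid R X).toLinearMap ∘ₗ rTensor X Coalgebra.counit ∘ₗ adCoaction f u
      = ((TensorProduct.lid R X).toLinearMap ∘ₗ lTensor R (TensorProduct.rid R X).toLinearMap) ∘ₗ
          TensorProduct.map Coalgebra.counit (TensorProduct.map id Coalgebra.counit) ∘ₗ
            f.toLinearMap ⋆ u ⋆ f.toLinearMap := by
        rw [adCoaction]
        simp only [← comp_assoc]
        congr 1
        ext; simp [mul_smul]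
    _ = ((TensorProduct.lid R X).toLinearMap ∘ₗ lTensor R (TensorProduct.rid R X).toLinearMap) ∘ₗ
          Coalgebra.counit ⋆ u ⋆ Coalgebra.counit := by
        rw [map_comp_convTensor, map_comp_convTensor, f.counit_comp, id_comp]
    _ = u := by
        rw [counit_convTensor, convTensor_counit]
        ext; simp

theorem coassoc_adCoaction (f : A →ₗc[R] B) (u : A →ₗ[R] X) :
    lTensor B (adCoaction f u) ∘ₗ adCoaction f id =
      (TensorProduct.assoc R B B X).toLinearMap ∘ₗ rTensor X Coalgebra.comul ∘ₗ
        adCoaction f u := by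
  have comul_outer : rTensor X Coalgebra.comul ∘ₗ
      outer (mul' R B ∘ₗ rTensor B S ∘ₗ (TensorProduct.comm R B B).toLinearMap) =
      outer (mul' R (B ⊗[R] B) ∘ₗ
        rTensor (B ⊗[R] B) ((TensorProduct.comm R B B).toLinearMap ∘ₗ TensorProduct.map S S) ∘ₗ
        (TensorProduct.comm R _ _).toLinearMap) ∘ₗ
      TensorProduct.map Coalgebra.comul (TensorProduct.map id Coalgebra.comul) := by
    ext b x b'
    have := LinearMap.congr_fun (comul_comp_antipode (R := R) (B := B)) b'
    simp only [convTensor, LinearMap.comp_apply] at this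
    simp [Bialgebra.comul_mul, this]
  rw [lTensor_comp_adCoaction, comp_id, adCoaction, adCoaction, comp_convTensor, convTensor_comp,
    ← comp_assoc _ _ (rTensor X _), comul_outer]
  simp only [comp_assoc, map_comp_convTensor, comul_comp_coalgHom, id_comp]
  simp only [convTensor_assoc, convTensor_comp]
  simp only [← comp_assoc]
  congr 1
  ext; simp

theorem conjMap_mul (f : A →ₗc[R] B) (u : A →ₗ[R] X) :
    (outer (mul' R B) ∘ₗ (TensorProduct.assoc R B X B).toLinearMap) ∘ₗ
      conjMap f u ⋆ f.toLinearMap = f.toLinearMap ⋆ u := by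
  calc (outer (mul' R B) ∘ₗ (TensorProduct.assoc R B X B).toLinearMap) ∘ₗ
        conjMap f u ⋆ f.toLinearMap
      = outer (mul' R B) ∘ₗ
          f.toLinearMap ⋆ u ⋆ (mul' R B ∘ₗ (S ∘ₗ f.toLinearMap) ⋆ f.toLinearMap) := by
        simp only [conjMap, comp_convTensor, convTensor_assoc, convTensor_comp]
        simp only [← comp_assoc]
        congr 1
        ext; simp [mul_assoc]
    _ = id ∘ₗ f.toLinearMap ⋆ u := by
        rw [mul_antipode_convTensor, convTensor_comp, convTensor_counit]
        simp only [convTensor_comp, ← comp_assoc]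
        congr 1
        ext; simp
    _ = f.toLinearMap ⋆ u := id_comp _

theorem antipode_mul_conjMap (f : A →ₗc[R] B) (u : A →ₗ[R] X) :
    (rTensor X (mul' R B ∘ₗ rTensor B S) ∘ₗ (TensorProduct.assoc R B B X).symm.toLinearMap) ∘ₗ
      f.toLinearMap ⋆ conjMap f u =
        (TensorProduct.comm R X B).toLinearMap ∘ₗ u ⋆ (S ∘ₗ f.toLinearMap) := by
  calc (rTensor X (mul' R B ∘ₗ rTensor B S) ∘ₗ
        (TensorProduct.assoc R B B X).symm.toLinearMap) ∘ₗ f.toLinearMap ⋆ conjMap f u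
      = outer (mul' R B ∘ₗ lTensor B S) ∘ₗ
          (mul' R B ∘ₗ (S ∘ₗ f.toLinearMap) ⋆ f.toLinearMap) ⋆ u ⋆ f.toLinearMap := by
        simp only [conjMap, comp_convTensor, convTensor_assoc, convTensor_comp]
        simp only [← comp_assoc]
        congr 1
        ext; simp [mul_assoc]
    _ = (TensorProduct.comm R X B).toLinearMap ∘ₗ u ⋆ (S ∘ₗ f.toLinearMap) := by
        rw [mul_antipode_convTensor, comp_convTensor, counit_convTensor, convTensor_comp]
        simp only [← comp_assoc]
        congr 1
        ext; simp

/-- The map `(b ⊗ (x ⊗ b')) ⊗ (c ⊗ y) ↦ S b' * c * b ⊗ (x ⊗ y)`. It turns a copy of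
`conjMap` standing on either side of `a ↦ f a⑴ ⊗ (v a⑵ ⊗ f a⑶)` into `adCoaction`. -/
def conjMerge : (B ⊗[R] (X ⊗[R] B)) ⊗[R] (B ⊗[R] Y) →ₗ[R] B ⊗[R] (X ⊗[R] Y) :=
  outer (mul' R B ∘ₗ (TensorProduct.comm R B B).toLinearMap) ∘ₗ
    lTensor B (lTensor (X ⊗[R] Y) (mul' R B ∘ₗ rTensor B S) ∘ₗ
      (tensorTensorTensorComm R X B Y B).toLinearMap ∘ₗ
      lTensor (X ⊗[R] B) (TensorProduct.comm R B Y).toLinearMap) ∘ₗ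
    (TensorProduct.assoc R B (X ⊗[R] B) (B ⊗[R] Y)).toLinearMap

@[simp]
theorem conjMerge_tmul (b b' c : B) (x : X) (y : Y) :
    conjMerge ((b ⊗ₜ[R] (x ⊗ₜ[R] b')) ⊗ₜ[R] (c ⊗ₜ[R] y)) =
      (S b' * c * b) ⊗ₜ[R] (x ⊗ₜ[R] y) := rfl

theorem conjMerge_convTensor_conjMap (f : A →ₗc[R] B) (v : A →ₗ[R] X) (u : A →ₗ[R] Y) :
    conjMerge ∘ₗ (f.toLinearMap ⋆ v ⋆ f.toLinearMap) ⋆ conjMap f u = adCoaction f (v ⋆ u) := by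
  calc conjMerge ∘ₗ (f.toLinearMap ⋆ v ⋆ f.toLinearMap) ⋆ conjMap f u
      = (outer (mul' R B ∘ₗ (TensorProduct.comm R B B).toLinearMap) ∘ₗ
          lTensor B ((TensorProduct.assoc R X Y B).symm.toLinearMap ∘ₗ
            lTensor X (TensorProduct.comm R B Y).toLinearMap)) ∘ₗ
          f.toLinearMap ⋆ v ⋆ ((rTensor Y (mul' R B ∘ₗ rTensor B S) ∘ₗ
            (TensorProduct.assoc R B B Y).symm.toLinearMap) ∘ₗ f.toLinearMap ⋆ conjMap f u) := by
        simp only [convTensor_assoc, convTensor_comp]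
        simp only [← comp_assoc]
        congr 1
        ext; simp
    _ = adCoaction f (v ⋆ u) := by
        rw [antipode_mul_conjMap, adCoaction]
        simp only [convTensor_assoc, convTensor_comp]
        simp only [← comp_assoc]
        congr 1
        ext; simp

theorem conjMerge_comm_conjMap_convTensor (f : A →ₗc[R] B) (u : A →ₗ[R] Y) (v : A →ₗ[R] X) :
    (conjMerge ∘ₗ (TensorProduct.comm R _ _).toLinearMap) ∘ₗ
        conjMap f u ⋆ f.toLinearMap ⋆ v ⋆ f.toLinearMap =
      lTensor B (TensorProduct.comm R Y X).toLinearMap ∘ₗ adCoaction f (u ⋆ v) := by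
  calc (conjMerge ∘ₗ (TensorProduct.comm R _ _).toLinearMap) ∘ₗ
        conjMap f u ⋆ f.toLinearMap ⋆ v ⋆ f.toLinearMap
      = (lTensor B (TensorProduct.comm R Y X).toLinearMap ∘ₗ
          outer (mul' R B ∘ₗ rTensor B S ∘ₗ (TensorProduct.comm R B B).toLinearMap) ∘ₗ
          lTensor B (TensorProduct.assoc R Y X B).symm.toLinearMap ∘ₗ
          (TensorProduct.assoc R B Y (X ⊗[R] B)).toLinearMap) ∘ₗ
          ((outer (mul' R B) ∘ₗ (TensorProduct.assoc R B Y B).toLinearMap) ∘ₗ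
            conjMap f u ⋆ f.toLinearMap) ⋆ v ⋆ f.toLinearMap := by
        simp only [comp_convTensor, convTensor_assoc]
        simp only [← comp_assoc]
        congr 1
        ext; simp [mul_assoc]
    _ = lTensor B (TensorProduct.comm R Y X).toLinearMap ∘ₗ adCoaction f (u ⋆ v) := by
        rw [conjMap_mul, adCoaction]
        simp only [convTensor_assoc, convTensor_comp]
        simp only [← comp_assoc]
        congr 1
        ext; simp

end AdjointCoaction

section ModuleCoalgebra

theorem id_comp_eq_comp_map_id {R X Y Z : Type*} [CommSemiring R] [AddCommMonoid X] [Module R X]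
    [AddCommMonoid Y] [Module R Y] [AddCommMonoid Z] [Module R Z] (g : X ⊗[R] Y →ₗ[R] Z) :
    LinearMap.id ∘ₗ g = g ∘ₗ TensorProduct.map LinearMap.id LinearMap.id := by
  rw [TensorProduct.map_id, comp_id, id_comp]

variable {R A B X : Type*} [CommSemiring R] [AddCommMonoid A] [Module R A] [Coalgebra R A]
  [Semiring B] [HopfAlgebra R B] [AddCommMonoid X] [Module R X]

theorem id_convTensor_comp_act (γ : A ⊗[R] B →ₗc[R] A) (u : A →ₗ[R] X)
    (hu : u ∘ₗ γ.toLinearMap =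
      (TensorProduct.rid R X).toLinearMap ∘ₗ TensorProduct.map u Coalgebra.counit) :
    LinearMap.id ⋆ u ∘ₗ γ.toLinearMap =
      (rTensor X γ.toLinearMap ∘ₗ (TensorProduct.rightComm R A X B).toLinearMap) ∘ₗ
        rTensor B (LinearMap.id ⋆ u) := by
  rw [convTensor_comp_coalgHom, hu, id_comp_eq_comp_map_id, ← map_comp_convTensor,
    map_convTensor_map, convTensor_counit, ← lTensor_comp_map, rTensor_def B]
  simp only [← comp_assoc]
  congr 1
  ext; simp

theorem convTensor_id_comp_act (γ : A ⊗[R] B →ₗc[R] A) (u : A →ₗ[R] X)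
    (hu : u ∘ₗ γ.toLinearMap =
      (TensorProduct.rid R X).toLinearMap ∘ₗ TensorProduct.map u Coalgebra.counit) :
    u ⋆ LinearMap.id ∘ₗ γ.toLinearMap =
      (lTensor X γ.toLinearMap ∘ₗ (TensorProduct.assoc R X A B).toLinearMap) ∘ₗ
        rTensor B (u ⋆ LinearMap.id) := by
  rw [convTensor_comp_coalgHom, hu, id_comp_eq_comp_map_id, ← map_comp_convTensor,
    map_convTensor_map, counit_convTensor, ← lTensor_comp_map, rTensor_def B]
  simp only [← comp_assoc]
  congr 1
  ext; simp

theorem conjMap_comp_act (γ : A ⊗[R] B →ₗc[R] A) (f : A →ₗc[R] B)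
    (hf : f.toLinearMap ∘ₗ γ.toLinearMap = mul' R B ∘ₗ rTensor B f.toLinearMap)
    (u : A →ₗ[R] X) (hu : u ∘ₗ γ.toLinearMap =
      (TensorProduct.rid R X).toLinearMap ∘ₗ TensorProduct.map u Coalgebra.counit) :
    conjMap f u ∘ₗ γ.toLinearMap =
      (TensorProduct.rid R (B ⊗[R] X)).toLinearMap ∘ₗ
        TensorProduct.map (conjMap f u) Coalgebra.counit := by
  let T : (B ⊗[R] (X ⊗[R] B)) ⊗[R] B →ₗ[R] B ⊗[R] X :=
    outer (mul' R B ∘ₗ lTensor B (HopfAlgebra.antipode R)) ∘ₗ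
      rTensor (X ⊗[R] B) (mul' R B ∘ₗ (TensorProduct.comm R B B).toLinearMap) ∘ₗ
      (TensorProduct.assoc R B B (X ⊗[R] B)).symm.toLinearMap ∘ₗ
      (TensorProduct.comm R (B ⊗[R] (X ⊗[R] B)) B).toLinearMap
  have hf' : f.toLinearMap ∘ₗ γ.toLinearMap =
      mul' R B ∘ₗ TensorProduct.map f.toLinearMap LinearMap.id := hf
  have id_counit_id : LinearMap.id ⋆ Coalgebra.counit ⋆ LinearMap.id =
      lTensor B (TensorProduct.lid R B).symm.toLinearMap ∘ₗ Coalgebra.comul := by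
    rw [counit_convTensor, convTensor_comp, id_convTensor_id]
  calc conjMap f u ∘ₗ γ.toLinearMap
      = T ∘ₗ TensorProduct.map (f.toLinearMap ⋆ u ⋆ f.toLinearMap)
          ((mul' R B ∘ₗ lTensor B (HopfAlgebra.antipode R)) ∘ₗ Coalgebra.comul) := by
        rw [conjMap, comp_assoc, convTensor_comp_coalgHom, convTensor_comp_coalgHom, hf', hu,
          ← map_comp_convTensor, ← map_comp_convTensor, map_convTensor_map_convTensor_map,
          id_counit_id, ← lTensor_comp_map, ← lTensor_comp_map]
        simp only [← comp_assoc]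
        congr 1
        ext; simp [T, HopfAlgebra.antipode_mul_antidistrib, mul_assoc]
    _ = T ∘ₗ TensorProduct.map (f.toLinearMap ⋆ u ⋆ f.toLinearMap)
          (Algebra.linearMap R B ∘ₗ Coalgebra.counit) := by
        rw [comp_assoc _ _ (mul' R B), HopfAlgebra.mul_antipode_lTensor_comul]
    _ = (TensorProduct.rid R (B ⊗[R] X)).toLinearMap ∘ₗ
          TensorProduct.map (conjMap f u) Coalgebra.counit := by
        rw [conjMap, ← lTensor_comp_map, ← rTensor_comp_map]
        simp only [← comp_assoc]
        congr 1
        ext; simp [T]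

end ModuleCoalgebra

theorem lcoactA_eq_adCoaction (f : C →ₗc[k] H) :
    lcoactA f.toLinearMap (𝒮 ∘ₗ f.toLinearMap) = adCoaction f LinearMap.id := by
  have conv_eq : f.toLinearMap ⋆ LinearMap.id ⋆ f.toLinearMap =
      TensorProduct.map f.toLinearMap (TensorProduct.map LinearMap.id f.toLinearMap) ∘ₗ
        lTensor C ΔC ∘ₗ ΔC := by
    rw [← id_convTensor_id_convTensor_id, map_comp_convTensor, map_comp_convTensor]
    simp only [comp_id]
  rw [lcoactA, adCoaction, conv_eq]
  simp only [← comp_assoc]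
  congr 2
  ext; simp

theorem adCoaction_comp_act (γ : C ⊗[k] H →ₗc[k] C) (f : C →ₗc[k] H)
    (hf : f.toLinearMap ∘ₗ γ.toLinearMap = mulH ∘ₗ rTensor H f.toLinearMap) :
    adCoaction f LinearMap.id ∘ₗ γ.toLinearMap =
      aydRLRhs mulH Δ 𝒮 γ.toLinearMap (adCoaction f LinearMap.id) := by
  have hf' : f.toLinearMap ∘ₗ γ.toLinearMap =
      mulH ∘ₗ TensorProduct.map f.toLinearMap LinearMap.id := hf
  rw [adCoaction, comp_assoc, convTensor_comp_coalgHom, convTensor_comp_coalgHom, hf',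
    id_comp_eq_comp_map_id, ← map_comp_convTensor, ← map_comp_convTensor,
    map_convTensor_map_convTensor_map, aydRLRhs, ← id_convTensor_id_convTensor_id,
    ← rTensor_comp_map]
  simp only [← comp_assoc]
  congr 1
  ext a b c x y z
  simp [HopfAlgebra.antipode_mul_antidistrib, mul_assoc]

theorem lTensor_functionals_jointly_injective {R X Y : Type*} [CommSemiring R] [AddCommMonoid X]
    [Module R X] [AddCommMonoid Y] [Module R Y] [Module.Free R Y] {s t : X ⊗[R] Y}
    (h : ∀ φ : Y →ₗ[R] R, lTensor X φ s = lTensor X φ t) : s = t := by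
  let b := Module.Free.chooseBasis R Y
  refine (TensorProduct.equivFinsuppOfBasisRight b).injective ?_
  ext i
  rw [TensorProduct.equivFinsuppOfBasisRight_apply, TensorProduct.equivFinsuppOfBasisRight_apply,
    h (b.coord i)]

section ModIdeal

variable {V X : Type*} [AddCommGroup V] [Module k V] [AddCommGroup X] [Module k X]

theorem mkQ_comp_act (γ : V ⊗[k] H →ₗ[k] V) :
    (modIdeal γ).mkQ ∘ₗ γ =
      (TensorProduct.rid k _).toLinearMap ∘ₗ TensorProduct.map (modIdeal γ).mkQ εH := by
  ext v h
  have : (modIdeal γ).mkQ (γ (v ⊗ₜ[k] h)) = (modIdeal γ).mkQ (εH h • v) :=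
    (Submodule.Quotient.eq _).2 (Submodule.subset_span ⟨v, h, rfl⟩)
  simpa using this

theorem modIdeal_le_ker {γ : V ⊗[k] H →ₗ[k] V} {g : V →ₗ[k] X}
    (hg : g ∘ₗ γ = (TensorProduct.rid k X).toLinearMap ∘ₗ TensorProduct.map g εH) :
    modIdeal γ ≤ ker g := by
  rw [modIdeal, Submodule.span_le]
  rintro _ ⟨v, h, rfl⟩
  simpa [sub_eq_zero] using LinearMap.congr_fun hg (v ⊗ₜ[k] h)

end ModIdeal

theorem cdSub_eq_eqLocus (γ : C ⊗[k] H →ₗ[k] C) :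
    cdSub γ = eqLocus (LinearMap.id ⋆ (modIdeal γ).mkQ)
      ((TensorProduct.comm k _ C).toLinearMap ∘ₗ (modIdeal γ).mkQ ⋆ LinearMap.id) := by
  have left_leg (φ : (C ⧸ modIdeal γ) →ₗ[k] k) : lTensor C (φ ∘ₗ (modIdeal γ).mkQ) ∘ₗ ΔC =
      lTensor C φ ∘ₗ LinearMap.id ⋆ (modIdeal γ).mkQ := by
    rw [← convTensor_comp]; rfl
  have right_leg (φ : (C ⧸ modIdeal γ) →ₗ[k] k) :
      (TensorProduct.lid k C).toLinearMap ∘ₗ rTensor C (φ ∘ₗ (modIdeal γ).mkQ) ∘ₗ ΔC =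
        (TensorProduct.rid k C).toLinearMap ∘ₗ lTensor C φ ∘ₗ
          (TensorProduct.comm k _ C).toLinearMap ∘ₗ (modIdeal γ).mkQ ⋆ LinearMap.id := by
    rw [convTensor]
    simp only [← comp_assoc]
    congr 1
    ext; simp
  ext c
  simp only [cdSub, left_leg, right_leg, Submodule.mem_iInf, mem_ker, mem_eqLocus,
    LinearMap.sub_apply, sub_eq_zero, comp_apply, LinearEquiv.coe_coe,
    EmbeddingLike.apply_eq_iff_eq]
  exact ⟨lTensor_functionals_jointly_injective, fun h φ => by rw [h]⟩

theorem act_mem_cdSub (γ : C ⊗[k] H →ₗc[k] C) {c : C} (hc : c ∈ cdSub γ.toLinearMap) (h : H) :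
    γ (c ⊗ₜ[k] h) ∈ cdSub γ.toLinearMap := by
  rw [cdSub_eq_eqLocus, mem_eqLocus, comp_apply] at hc ⊢
  set D := C ⧸ modIdeal γ.toLinearMap
  set π : C →ₗ[k] D := (modIdeal γ.toLinearMap).mkQ
  calc (LinearMap.id ⋆ π) (γ (c ⊗ₜ[k] h))
      = rTensor D γ.toLinearMap
          (TensorProduct.rightComm k C D H ((LinearMap.id ⋆ π) c ⊗ₜ[k] h)) :=
        LinearMap.congr_fun (id_convTensor_comp_act γ π (mkQ_comp_act _)) (c ⊗ₜ[k] h)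
    _ = rTensor D γ.toLinearMap (TensorProduct.rightComm k C D H
          (TensorProduct.comm k D C ((π ⋆ LinearMap.id) c) ⊗ₜ[k] h)) := by rw [hc]; rfl
    _ = TensorProduct.comm k D C (lTensor D γ.toLinearMap
          (TensorProduct.assoc k D C H ((π ⋆ LinearMap.id) c ⊗ₜ[k] h))) := by
        induction (π ⋆ LinearMap.id) c <;> simp_all [TensorProduct.add_tmul]
    _ = TensorProduct.comm k D C ((π ⋆ LinearMap.id) (γ (c ⊗ₜ[k] h))) :=
        congrArg (TensorProduct.comm k D C) (LinearMap.congr_fun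
          (convTensor_id_comp_act γ π (mkQ_comp_act _)) (c ⊗ₜ[k] h)).symm

theorem adCoaction_mem_range_lTensor_cdSub (γ : C ⊗[k] H →ₗc[k] C) (f : C →ₗc[k] H)
    (hf : f.toLinearMap ∘ₗ γ.toLinearMap = mulH ∘ₗ rTensor H f.toLinearMap) {c : C}
    (hc : c ∈ cdSub γ.toLinearMap) :
    adCoaction f LinearMap.id c ∈ range (lTensor H (cdSub γ.toLinearMap).subtype) := by
  set D := C ⧸ modIdeal γ.toLinearMap
  set π := (modIdeal γ.toLinearMap).mkQ
  let κ : D →ₗ[k] H ⊗[k] D := (modIdeal γ.toLinearMap).liftQ (conjMap f π)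
    (modIdeal_le_ker (conjMap_comp_act γ f hf π (mkQ_comp_act _)))
  have κ_comp_π : κ ∘ₗ π = conjMap f π := Submodule.liftQ_mkQ _ _ _
  let fidf : C →ₗ[k] H ⊗[k] (C ⊗[k] H) := f.toLinearMap ⋆ LinearMap.id ⋆ f.toLinearMap
  let L : C ⊗[k] D →ₗ[k] H ⊗[k] (C ⊗[k] D) := conjMerge ∘ₗ TensorProduct.map fidf κ
  have left_leg : lTensor H (LinearMap.id ⋆ π) ∘ₗ adCoaction f LinearMap.id =
      L ∘ₗ LinearMap.id ⋆ π := by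
    rw [lTensor_comp_adCoaction, comp_id, comp_assoc, map_comp_convTensor, κ_comp_π, comp_id,
      conjMerge_convTensor_conjMap]
  have right_leg : lTensor H ((TensorProduct.comm k D C).toLinearMap ∘ₗ π ⋆ LinearMap.id) ∘ₗ
      adCoaction f LinearMap.id =
        L ∘ₗ (TensorProduct.comm k D C).toLinearMap ∘ₗ π ⋆ LinearMap.id := by
    have L_comm : L ∘ₗ (TensorProduct.comm k D C).toLinearMap =
        (conjMerge ∘ₗ (TensorProduct.comm k _ _).toLinearMap) ∘ₗ TensorProduct.map κ fidf := by
      ext; simp [L]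
    rw [← comp_assoc, L_comm, comp_assoc, map_comp_convTensor, κ_comp_π, comp_id,
      conjMerge_comm_conjMap_convTensor, lTensor_comp, comp_assoc, lTensor_comp_adCoaction, comp_id]
  rw [cdSub_eq_eqLocus, mem_eqLocus] at hc
  rw [cdSub_eq_eqLocus]
  refine (Module.Flat.eqLocus_lTensor_eq k H (LinearMap.id ⋆ π) _).le (mem_eqLocus.2 ?_)
  exact (LinearMap.congr_fun left_leg c).trans
    ((congrArg L hc).trans (LinearMap.congr_fun right_leg c).symm)

theorem total_cointegral_coalgebra_map_gives_AYD_on_CD_general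
    (γ : C ⊗[k] H →ₗc[k] C) (f : C →ₗc[k] H)
    (hf : f.toLinearMap ∘ₗ γ.toLinearMap = mulH ∘ₗ rTensor H f.toLinearMap) :
    (∀ c ∈ cdSub γ.toLinearMap, ∀ h : H, γ (c ⊗ₜ[k] h) ∈ cdSub γ.toLinearMap) ∧
    (∀ c ∈ cdSub γ.toLinearMap, lcoactA f.toLinearMap (𝒮 ∘ₗ f.toLinearMap) c ∈
      range (lTensor H (cdSub γ.toLinearMap).subtype)) ∧
    (∀ c, lTensor H (lcoactA f.toLinearMap (𝒮 ∘ₗ f.toLinearMap))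
        (lcoactA f.toLinearMap (𝒮 ∘ₗ f.toLinearMap) c) =
      TensorProduct.assoc k H H C (rTensor C Δ (lcoactA f.toLinearMap (𝒮 ∘ₗ f.toLinearMap) c))) ∧
    (∀ c, TensorProduct.lid k C
      (rTensor C εH (lcoactA f.toLinearMap (𝒮 ∘ₗ f.toLinearMap) c)) = c) ∧
    (∀ c, ∀ h : H, lcoactA f.toLinearMap (𝒮 ∘ₗ f.toLinearMap) (γ (c ⊗ₜ[k] h)) =
      aydRLRhs mulH Δ 𝒮 γ.toLinearMap (lcoactA f.toLinearMap (𝒮 ∘ₗ f.toLinearMap))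
        (c ⊗ₜ[k] h)) := by
  rw [lcoactA_eq_adCoaction]
  exact ⟨fun c hc h => act_mem_cdSub γ hc h,
    fun c hc => adCoaction_mem_range_lTensor_cdSub γ f hf hc,
    LinearMap.congr_fun (coassoc_adCoaction f LinearMap.id),
    LinearMap.congr_fun (counit_comp_adCoaction f LinearMap.id),
    fun c h => LinearMap.congr_fun (adCoaction_comp_act γ f hf) (c ⊗ₜ[k] h)⟩

/-- For a total cointegral `f : C → H` which is a coalgebra map, `C^D` with
its original action and the left coaction `c ↦ f⁻¹ c⑶ * f c⑴ ⊗ c⑵` is a right-left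
anti-Yetter-Drinfeld module over `H`; moreover if `c⑵ · (f⁻¹ c⑶ * f c⑴) = c` for all
`c ∈ C^D` then it is stable. -/
theorem total_cointegral_coalgebra_map_gives_AYD_on_CD
    (Sinv : H →ₗ[k] H) (hS₁ : Sinv ∘ₗ 𝒮 = LinearMap.id) (hS₂ : 𝒮 ∘ₗ Sinv = LinearMap.id)
    (γ : C ⊗[k] H →ₗ[k] C)
    (hγ_assoc : γ ∘ₗ lTensor C mulH =
      γ ∘ₗ rTensor H γ ∘ₗ (TensorProduct.assoc k C H H).symm.toLinearMap)
    (hγ_one : ∀ c : C, γ (c ⊗ₜ[k] (1 : H)) = c)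
    (hγ_comul : ΔC ∘ₗ γ = TensorProduct.map γ γ ∘ₗ
      (tensorTensorTensorComm k C C H H).toLinearMap ∘ₗ TensorProduct.map ΔC Δ)
    (hγ_counit : εC ∘ₗ γ = LinearMap.mul' k k ∘ₗ TensorProduct.map εC εH)
    (f : C →ₗ[k] H) (hf_counit : εH ∘ₗ f = εC)
    (hf_mod : f ∘ₗ γ = mulH ∘ₗ rTensor H f)
    (hf_comul : Δ ∘ₗ f = TensorProduct.map f f ∘ₗ ΔC)
 :
    (∀ c ∈ cdSub γ, ∀ h : H, γ (c ⊗ₜ[k] h) ∈ cdSub γ) ∧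
    (∀ c ∈ cdSub γ, lcoactA f (𝒮 ∘ₗ f) c ∈ LinearMap.range (lTensor H (cdSub γ).subtype)) ∧
    (∀ c ∈ cdSub γ,
      lTensor H (lcoactA f (𝒮 ∘ₗ f)) (lcoactA f (𝒮 ∘ₗ f) c) =
        (TensorProduct.assoc k H H C) (rTensor C Δ (lcoactA f (𝒮 ∘ₗ f) c))) ∧
    (∀ c ∈ cdSub γ,
      (TensorProduct.lid k C) (rTensor C εH (lcoactA f (𝒮 ∘ₗ f) c)) = c) ∧
    (∀ c ∈ cdSub γ, ∀ h : H,
      lcoactA f (𝒮 ∘ₗ f) (γ (c ⊗ₜ[k] h)) =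
        aydRLRhs mulH Δ 𝒮 γ (lcoactA f (𝒮 ∘ₗ f)) (c ⊗ₜ[k] h)) ∧
    ((∀ c ∈ cdSub γ, γ ((TensorProduct.comm k H C) (lcoactA f (𝒮 ∘ₗ f) c)) = c) →
      ∀ c ∈ cdSub γ, γ ((TensorProduct.comm k H C) (lcoactA f (𝒮 ∘ₗ f) c)) = c) := by
  let γ' : C ⊗[k] H →ₗc[k] C := ⟨γ, by rw [hγ_counit]; ext; simp [mul_comm], by rw [hγ_comul]; rfl⟩
  obtain ⟨act_mem, coact_mem, coassoc, counit, ayd⟩ :=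
    total_cointegral_coalgebra_map_gives_AYD_on_CD_general γ' ⟨f, hf_counit, hf_comul.symm⟩ hf_mod
  exact ⟨act_mem, coact_mem, fun c _ => coassoc c, fun c _ => counit c, fun c _ => ayd c, id⟩
end
end
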